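/- Minimax duality for the perturbed information-regret game: if Λ is a compact set and d(k,·) is continuous for each k, then max_{w̃∈Δ} inf_{λ∈Λ} Σ_k w̃^k d(k,λ)/Δ_ε^k = inf_{q∈Δ(Λ)} max_k E_{λ∼q}[d(k,λ)]/Δ_ε^k, where Δ(Λ) is the set of probability measures on Λ. -/

import Mathlib

open MeasureTheory

lemma irm_integrable {Λ : Type*} [MetricSpace Λ] [CompactSpace Λ]
    [MeasurableSpace Λ] [BorelSpace Λ] (f : Λ → ℝ) (hf : Continuous f)
    (μ : Measure Λ) [IsFiniteMeasure μ] : Integrable f μ :=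
  hf.integrable_of_hasCompactSupport (HasCompactSupport.of_compactSpace f)

lemma irm_convex {K : ℕ} {Λ : Type*} [MetricSpace Λ] [CompactSpace Λ]
    [MeasurableSpace Λ] [BorelSpace Λ]
    (d : Fin K → Λ → ℝ) (hdc : ∀ k, Continuous (d k)) (Δ : Fin K → ℝ) :
    Convex ℝ {x : Fin K → ℝ | ∃ q : ProbabilityMeasure Λ,
      ∀ k, x k = (∫ l, d k l ∂(q : Measure Λ)) / Δ k} := by
  rintro x ⟨p, hp⟩ y ⟨q, hq⟩ a b ha hb hab
  have hprob : IsProbabilityMeasure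
      (ENNReal.ofReal a • (p : Measure Λ) + ENNReal.ofReal b • (q : Measure Λ)) := by
    constructor
    simp only [Measure.add_apply, Measure.smul_apply, measure_univ, smul_eq_mul, mul_one]
    rw [← ENNReal.ofReal_add ha hb, hab, ENNReal.ofReal_one]
  refine ⟨⟨_, hprob⟩, fun k => ?_⟩
  have h1 := irm_integrable (d k) (hdc k) (p : Measure Λ)
  have h2 := irm_integrable (d k) (hdc k) (q : Measure Λ)
  rw [ProbabilityMeasure.coe_mk, integral_add_measure (h1.smul_measure ENNReal.ofReal_ne_top)
    (h2.smul_measure ENNReal.ofReal_ne_top), integral_smul_measure, integral_smul_measure,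
    ENNReal.toReal_ofReal ha, ENNReal.toReal_ofReal hb]
  simp only [Pi.add_apply, Pi.smul_apply, smul_eq_mul, hp k, hq k]
  ring

lemma irm_sep {K : ℕ} [Nonempty (Fin K)] (C : Set (Fin K → ℝ)) (hC : Convex ℝ C)
    (hne : C.Nonempty) (t : ℝ) (h : ∀ x ∈ C, ∃ k, t ≤ x k) :
    ∃ w ∈ stdSimplex ℝ (Fin K), ∀ x ∈ C, t ≤ ∑ k, w k * x k := by
  have hO : IsOpen (Set.univ.pi fun _ : Fin K => Set.Iio t) :=
    isOpen_set_pi Set.finite_univ fun _ _ => isOpen_Iio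
  have hOc : Convex ℝ (Set.univ.pi fun _ : Fin K => Set.Iio t) :=
    convex_pi fun _ _ => convex_Iio t
  have hdis : Disjoint (Set.univ.pi fun _ : Fin K => Set.Iio t) C := by
    rw [Set.disjoint_left]
    intro x hx hxC
    obtain ⟨k, hk⟩ := h x hxC
    exact absurd (hx k trivial) (not_lt.mpr hk)
  obtain ⟨g, u, hg1, hg2⟩ := geometric_hahn_banach_open hOc hO hC hdis
  obtain ⟨c, hc⟩ : ∃ c : Fin K → ℝ, ∀ x, g x = ∑ k, c k * x k := by
    refine ⟨fun k => g (fun j => if k = j then 1 else 0), fun x => ?_⟩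
    have := LinearMap.pi_apply_eq_sum_univ (g : (Fin K → ℝ) →ₗ[ℝ] ℝ) x
    simp only [ContinuousLinearMap.coe_coe, smul_eq_mul] at this
    rw [this]
    exact Finset.sum_congr rfl fun k _ => mul_comm _ _
  have hc0 : ∀ k, 0 ≤ c k := by
    intro k
    by_contra! hk
    set A := (∑ j, c j) * (t - 1)
    have hs : 0 ≤ |u - A| / (- c k) := div_nonneg (abs_nonneg _) (by linarith)
    have := hg1 (fun j => (t - 1) - if j = k then |u - A| / (- c k) else 0) (by
      intro j _
      simp only [Set.mem_Iio]
      split_ifs <;> linarith)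
    rw [hc] at this
    simp only [mul_sub, Finset.sum_sub_distrib, mul_ite, mul_zero, Finset.sum_ite_eq',
      Finset.mem_univ, if_true] at this
    have e1 : c k * (|u - A| / (- c k)) = - |u - A| := by
      field_simp [hk.ne]
    have e2 : ∑ j, c j * t - ∑ j, c j * 1 = A := by
      simp only [A, mul_sub, Finset.sum_mul]
    rw [e1, e2] at this
    linarith [le_abs_self (u - A)]
  have hconst : ∀ s < t, (∑ j, c j) * s < u := by
    intro s hs
    have := hg1 (fun _ => s) (fun _ _ => hs)
    rwa [hc, ← Finset.sum_mul] at this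
  have hS : 0 < ∑ j, c j := by
    refine lt_of_le_of_ne (Finset.sum_nonneg fun j _ => hc0 j) fun h0 => ?_
    have hz : ∀ j, c j = 0 := fun j =>
      (Finset.sum_eq_zero_iff_of_nonneg fun j _ => hc0 j).1 h0.symm j (Finset.mem_univ j)
    have h1 := hconst (t - 1) (by linarith)
    obtain ⟨x, hx⟩ := hne
    have h2 := hg2 x hx
    simp [hc, hz] at h1 h2
    linarith
  have htu : t * (∑ j, c j) ≤ u := by
    by_contra! hlt
    have := hconst (u / ∑ j, c j) ((div_lt_iff₀ hS).2 hlt)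
    rw [mul_div_cancel₀ _ hS.ne'] at this
    exact lt_irrefl _ this
  refine ⟨fun k => c k / ∑ j, c j, ⟨fun k => div_nonneg (hc0 k) hS.le, ?_⟩, fun x hx => ?_⟩
  · rw [← Finset.sum_div, div_self hS.ne']
  · have h2 := hg2 x hx
    rw [hc] at h2
    have : ∑ k, c k / (∑ j, c j) * x k = (∑ k, c k * x k) / ∑ j, c j := by
      rw [Finset.sum_div]
      exact Finset.sum_congr rfl fun k _ => by ring
    rw [this, le_div_iff₀ hS]
    linarith

/-- Minimax duality for the perturbed information-regret game: randomising the
`λ`-player licenses the min-max swap. -/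
theorem information_regret_minimax {K : ℕ} [Nonempty (Fin K)]
    {Λ : Type*} [MetricSpace Λ] [CompactSpace Λ] [Nonempty Λ]
    [MeasurableSpace Λ] [BorelSpace Λ]
    (d : Fin K → Λ → ℝ) (hdc : ∀ k, Continuous (d k)) (hd : ∀ k l, 0 ≤ d k l)
    (Δ : Fin K → ℝ) (hΔ : ∀ k, 0 < Δ k) :
    (⨆ w ∈ stdSimplex ℝ (Fin K), ⨅ l : Λ, ∑ k, w k * (d k l / Δ k)) =
    ⨅ q : ProbabilityMeasure Λ, ⨆ k : Fin K,
      (∫ l, d k l ∂(q : Measure Λ)) / Δ k := by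
  obtain ⟨l0⟩ := ‹Nonempty Λ›
  haveI : Nonempty Λ := ⟨l0⟩
  let q0 : ProbabilityMeasure Λ := ⟨Measure.dirac l0, inferInstance⟩
  haveI : Nonempty (ProbabilityMeasure Λ) := ⟨q0⟩
  have hfn : ∀ k l, 0 ≤ d k l / Δ k := fun k l => div_nonneg (hd k l) (hΔ k).le
  have hqn : ∀ (q : ProbabilityMeasure Λ) k, 0 ≤ (∫ l, d k l ∂(q : Measure Λ)) / Δ k :=
    fun q k => div_nonneg (integral_nonneg (hd k)) (hΔ k).le
  have hsupn : ∀ q : ProbabilityMeasure Λ,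
      0 ≤ ⨆ k : Fin K, (∫ l, d k l ∂(q : Measure Λ)) / Δ k :=
    fun q => Real.iSup_nonneg (hqn q)
  have hbdq : BddBelow (Set.range fun q : ProbabilityMeasure Λ =>
      ⨆ k : Fin K, (∫ l, d k l ∂(q : Measure Λ)) / Δ k) :=
    ⟨0, by rintro _ ⟨q, rfl⟩; exact hsupn q⟩
  have hbdl : ∀ w ∈ stdSimplex ℝ (Fin K),
      BddBelow (Set.range fun l : Λ => ∑ k, w k * (d k l / Δ k)) := by
    intro w hw
    exact ⟨0, by
      rintro _ ⟨l, rfl⟩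
      exact Finset.sum_nonneg fun k _ => mul_nonneg (hw.1 k) (hfn k l)⟩
  have key : ∀ w ∈ stdSimplex ℝ (Fin K), ∀ q : ProbabilityMeasure Λ,
      (⨅ l : Λ, ∑ k, w k * (d k l / Δ k)) ≤
        ⨆ k : Fin K, (∫ l, d k l ∂(q : Measure Λ)) / Δ k := by
    intro w hw q
    have hint : ∀ k ∈ Finset.univ, Integrable (fun l => w k * (d k l / Δ k)) (q : Measure Λ) :=
      fun k _ => ((irm_integrable (d k) (hdc k) _).div_const _).const_mul _
    calc (⨅ l : Λ, ∑ k, w k * (d k l / Δ k))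
        = ∫ _, (⨅ l : Λ, ∑ k, w k * (d k l / Δ k)) ∂(q : Measure Λ) := by simp
      _ ≤ ∫ l, ∑ k, w k * (d k l / Δ k) ∂(q : Measure Λ) :=
          integral_mono (integrable_const _) (integrable_finsetSum _ hint)
            fun l => ciInf_le (hbdl w hw) l
      _ = ∑ k, w k * ((∫ l, d k l ∂(q : Measure Λ)) / Δ k) := by
          rw [integral_finsetSum _ hint]
          exact Finset.sum_congr rfl fun k _ => by
            rw [integral_const_mul, integral_div]
      _ ≤ ∑ k, w k * (⨆ k : Fin K, (∫ l, d k l ∂(q : Measure Λ)) / Δ k) :=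
          Finset.sum_le_sum fun k _ => mul_le_mul_of_nonneg_left
            (le_ciSup (f := fun k : Fin K => (∫ l, d k l ∂(q : Measure Λ)) / Δ k)
              (Set.finite_range _).bddAbove k) (hw.1 k)
      _ = _ := by rw [← Finset.sum_mul, hw.2, one_mul]
  have hinner : ∀ w, (⨆ _ : w ∈ stdSimplex ℝ (Fin K), ⨅ l : Λ, ∑ k, w k * (d k l / Δ k)) ≤
      ⨅ q : ProbabilityMeasure Λ, ⨆ k : Fin K, (∫ l, d k l ∂(q : Measure Λ)) / Δ k := by
    intro w
    exact Real.iSup_le (fun hw => le_ciInf fun q => key w hw q) (le_ciInf hsupn)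
  refine le_antisymm (ciSup_le hinner) ?_
  obtain ⟨w, hw, hwC⟩ := irm_sep _ (irm_convex d hdc Δ) ⟨_, q0, fun k => rfl⟩
    (⨅ q : ProbabilityMeasure Λ, ⨆ k : Fin K, (∫ l, d k l ∂(q : Measure Λ)) / Δ k) (by
      rintro x ⟨q, hq⟩
      obtain ⟨k, hk⟩ := exists_eq_ciSup_of_finite
        (f := fun k : Fin K => (∫ l, d k l ∂(q : Measure Λ)) / Δ k)
      exact ⟨k, by rw [hq k]; exact (ciInf_le hbdq q).trans hk.ge⟩)
  refine le_trans ?_ (le_ciSup (f := fun w => ⨆ _ : w ∈ stdSimplex ℝ (Fin K),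
    ⨅ l : Λ, ∑ k, w k * (d k l / Δ k)) ⟨_, by rintro _ ⟨w, rfl⟩; exact hinner w⟩ w)
  simp only [ciSup_pos hw]
  refine le_ciInf fun l => hwC (fun k => d k l / Δ k)
    ⟨⟨Measure.dirac l, inferInstance⟩, fun k => ?_⟩
  rw [ProbabilityMeasure.coe_mk, integral_dirac]
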